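/- arXiv:2109.12815 — 2 statements merged into one kernel-verified Lean document; each statement's English description precedes it below -/
import Mathlib

section
/- Let s ∈ (0,1), δ ∈ (0, 1/s − 1), C₀, M₀ ≥ 1, and suppose a ∈ C^∞(−1,1) satisfies |∂_v^α a(v)| ≤ C₀ M₀^α (α!)^{1/s} for all v ∈ (−1,1) and α ≥ 0. Suppose h ∈ C^∞(−1,1) solves (m² − ∂_v²)h + a·h = 0 on (−1,1) with ‖h‖_{L²(−1,1)} = 1. Then there exists M₁ (depending only on C₀, M₀, s, δ) such that ‖∂_v^j h‖_{L²(−r_j, r_j)} ≤ M₁^j (j!)^{1/s} for all j ≥ 0, where r_j = 1/2 + 1/(2(9+j)^δ). -/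
open Real Set Filter Topology MeasureTheory

lemma aux_contDiffOn_iter (h : ℝ → ℝ) (hh : ContDiffOn ℝ (⊤ : ℕ∞) h (Set.Ioo (-1) 1)) (j : ℕ) :
    ContDiffOn ℝ (⊤ : ℕ∞) (iteratedDeriv j h) (Set.Ioo (-1) 1) := by
  induction j with
  | zero => simpa using hh
  | succ n ih =>
    rw [iteratedDeriv_succ]
    exact ((contDiffOn_infty_iff_deriv_of_isOpen isOpen_Ioo).1 ih).2

lemma aux_hasDerivAt_iter (h : ℝ → ℝ) (hh : ContDiffOn ℝ (⊤ : ℕ∞) h (Set.Ioo (-1) 1)) (j : ℕ)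
    (v : ℝ) (hv : v ∈ Set.Ioo (-1:ℝ) 1) :
    HasDerivAt (iteratedDeriv j h) (iteratedDeriv (j+1) h v) v := by
  rw [iteratedDeriv_succ]
  have := ((contDiffOn_infty_iff_deriv_of_isOpen isOpen_Ioo).1 (aux_contDiffOn_iter h hh j)).1
  exact (this.differentiableAt (isOpen_Ioo.mem_nhds hv)).hasDerivAt

lemma aux_ode (a h : ℝ → ℝ) (m : ℝ)
    (ha : ContDiffOn ℝ (⊤ : ℕ∞) a (Set.Ioo (-1) 1))
    (hh : ContDiffOn ℝ (⊤ : ℕ∞) h (Set.Ioo (-1) 1))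
    (hode : ∀ v ∈ Set.Ioo (-1:ℝ) 1, m ^ 2 * h v - deriv (deriv h) v + a v * h v = 0)
    (j : ℕ) (v : ℝ) (hv : v ∈ Set.Ioo (-1:ℝ) 1) :
    iteratedDeriv (j+2) h v = m ^ 2 * iteratedDeriv j h v +
      ∑ k ∈ Finset.range (j+1), (j.choose k : ℝ) * iteratedDeriv k h v *
        iteratedDeriv (j-k) a v := by
  have hn := isOpen_Ioo.mem_nhds hv
  have hhA : ContDiffAt ℝ j h v := (hh.contDiffAt hn).of_le (by exact_mod_cast le_top)
  have haA : ContDiffAt ℝ j a v := (ha.contDiffAt hn).of_le (by exact_mod_cast le_top)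
  have h1 : iteratedDeriv (j+2) h = iteratedDeriv j (deriv (deriv h)) := by
    rw [iteratedDeriv_succ', iteratedDeriv_succ']
  have h2 : deriv (deriv h) =ᶠ[𝓝 v] ((fun x => m^2 * h x) + h * a) := by
    filter_upwards [hn] with x hx
    have := hode x hx
    simp only [Pi.add_apply, Pi.mul_apply]
    linarith
  have hpA : ContDiffAt ℝ j (h * a) v := hhA.mul haA
  rw [h1, h2.iteratedDeriv_eq, iteratedDeriv_add (contDiffAt_const.mul hhA) hpA,
    iteratedDeriv_mul hhA haA]
  congr 1
  exact iteratedDeriv_const_mul _ hhA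

lemma aux_energy (u0 u1 u2 G : ℝ → ℝ) (R ρ : ℝ) (hρ : 0 < ρ) (hρR : ρ < R) (hR : R < 1)
    (d0 : ∀ v ∈ Set.Ioo (-1:ℝ) 1, HasDerivAt u0 (u1 v) v)
    (d1 : ∀ v ∈ Set.Ioo (-1:ℝ) 1, HasDerivAt u1 (u2 v) v)
    (c2 : ContinuousOn u2 (Set.Ioo (-1) 1)) (cG : ContinuousOn G (Set.Ioo (-1) 1))
    (G0 : ∀ v ∈ Set.Ioo (-1:ℝ) 1, 0 ≤ G v)
    (hG : ∀ v ∈ Set.Ioo (-1:ℝ) 1, -(u0 v * u2 v) ≤ G v) :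
    (1/2) * (R^2-ρ^2)^2 * ∫ v in (-ρ)..ρ, (u1 v)^2 ≤ ∫ v in (-R)..R, (8 * (u0 v)^2 + G v) := by
  have hsub : Set.Icc (-R) R ⊆ Set.Ioo (-1:ℝ) 1 := fun x hx =>
    ⟨by linarith [hx.1], by linarith [hx.2]⟩
  have hu : Set.uIcc (-R) R = Set.Icc (-R) R := Set.uIcc_of_le (by linarith)
  have c0 : ContinuousOn u0 (Set.Icc (-R) R) := fun x hx =>
    (d0 x (hsub hx)).continuousAt.continuousWithinAt
  have c1 : ContinuousOn u1 (Set.Icc (-R) R) := fun x hx =>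
    (d1 x (hsub hx)).continuousAt.continuousWithinAt
  have c2' := c2.mono hsub
  have cG' := cG.mono hsub
  set F' : ℝ → ℝ := fun v => (2 * (R^2-v^2) * (-2*v) * u0 v + (R^2-v^2)^2 * u1 v) * u1 v
    + (R^2-v^2)^2 * u0 v * u2 v with hF'
  have cF' : ContinuousOn F' (Set.Icc (-R) R) := by
    rw [hF']; fun_prop
  have iF' : IntervalIntegrable F' volume (-R) R := (hu ▸ cF').intervalIntegrable
  have hF : ∫ v in (-R)..R, F' v = 0 := by
    rw [intervalIntegral.integral_eq_sub_of_hasDerivAt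
      (f := fun v => (R^2-v^2)^2 * u0 v * u1 v) _ iF']
    · ring
    · intro x hx
      rw [hu] at hx
      have e : HasDerivAt (fun v : ℝ => (R^2-v^2)^2) (2 * (R^2-x^2) * (-2*x)) x := by
        have := ((hasDerivAt_const x (R^2)).sub (hasDerivAt_pow 2 x)).pow 2
        refine this.congr_deriv ?_
        simp
      exact ((e.mul (d0 x (hsub hx))).mul (d1 x (hsub hx)))
  have iq : IntervalIntegrable (fun v => 8 * (u0 v)^2 + G v) volume (-R) R := by
    apply ContinuousOn.intervalIntegrable; rw [hu]; fun_prop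
  have iw : IntervalIntegrable (fun v => (1/2) * (R^2-v^2)^2 * (u1 v)^2) volume (-R) R := by
    apply ContinuousOn.intervalIntegrable; rw [hu]; fun_prop
  have hle : ∫ v in (-R)..R, (1/2) * (R^2-v^2)^2 * (u1 v)^2 ≤
      ∫ v in (-R)..R, (F' v + (8 * (u0 v)^2 + G v)) := by
    apply intervalIntegral.integral_mono_on (by linarith) iw (iF'.add iq)
    intro v hv
    have g0 := G0 v (hsub hv)
    have g1 := hG v (hsub hv)
    have v2 : v^2 ≤ R^2 := sq_le_sq' hv.1 hv.2
    have R1 : R^2 ≤ 1 := by nlinarith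
    have p0 : 0 ≤ R^2 - v^2 := by linarith
    have p1 : R^2 - v^2 ≤ 1 := by nlinarith [sq_nonneg v]
    have q1 : (R^2-v^2)^2 ≤ 1 := by nlinarith
    have q2 : (R^2-v^2)^2 * (-(u0 v * u2 v)) ≤ G v := by
      calc (R^2-v^2)^2 * (-(u0 v * u2 v)) ≤ (R^2-v^2)^2 * G v := by gcongr
        _ ≤ 1 * G v := by gcongr
        _ = G v := one_mul _
    have q3 : v^2 * (u0 v)^2 ≤ 1 * (u0 v)^2 := by gcongr; linarith
    simp only [hF']
    nlinarith [sq_nonneg ((R^2-v^2) * u1 v - 4 * v * u0 v)]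
  rw [intervalIntegral.integral_add iF' iq, hF, zero_add] at hle
  refine le_trans ?_ hle
  have h3 : ∫ v in (-ρ)..ρ, (1/2) * (R^2-v^2)^2 * (u1 v)^2 ≤
      ∫ v in (-R)..R, (1/2) * (R^2-v^2)^2 * (u1 v)^2 := by
    apply intervalIntegral.integral_mono_interval (by linarith) (by linarith) (by linarith) _ iw
    exact Eventually.of_forall fun v => by simp only [Pi.zero_apply]; positivity
  refine le_trans ?_ h3
  rw [← intervalIntegral.integral_const_mul]
  have hs2 : Set.uIcc (-ρ) ρ ⊆ Set.Icc (-R) R := by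
    rw [Set.uIcc_of_le (by linarith)]
    exact Set.Icc_subset_Icc (by linarith) (by linarith)
  have c1' := c1.mono hs2
  apply intervalIntegral.integral_mono_on (by linarith)
  · apply ContinuousOn.intervalIntegrable; fun_prop
  · apply ContinuousOn.intervalIntegrable; fun_prop
  · intro v hv
    have v2 : v^2 ≤ ρ^2 := sq_le_sq' hv.1 hv.2
    have : ρ^2 ≤ R^2 := by gcongr
    have : 0 ≤ R^2 - ρ^2 := by linarith
    gcongr

lemma aux_rdiff (δ x : ℝ) (hδ : 0 < δ) (hx : 1 ≤ x) :
    δ / 2 / (x+1)^(1+δ) ≤ 1/(2*x^δ) - 1/(2*(x+1)^δ) := by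
  have hx0 : 0 < x := by linarith
  have hp : 0 < x^δ := rpow_pos_of_pos hx0 _
  have hp' : 0 < (x+1)^δ := rpow_pos_of_pos (by linarith) _
  have h1 : 1 + δ/(x+1) ≤ ((x+1)/x)^δ := by
    rw [rpow_def_of_pos (by positivity)]
    have h2 : 1/(x+1) ≤ Real.log ((x+1)/x) := by
      have := Real.one_sub_inv_le_log_of_pos (show 0 < (x+1)/x by positivity)
      refine le_trans (le_of_eq ?_) this
      field_simp; ring
    have := Real.add_one_le_exp (Real.log ((x+1)/x) * δ)
    have h3 : 1/(x+1)*δ ≤ Real.log ((x+1)/x) * δ := by gcongr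
    have h4 : δ/(x+1) = 1/(x+1)*δ := by ring
    linarith
  rw [div_rpow (by linarith) hx0.le, le_div_iff₀ hp] at h1
  rw [rpow_add (by linarith), rpow_one, div_sub_div _ _ (by positivity) (by positivity), div_div,
    div_le_div_iff₀ (by positivity) (by positivity)]
  have h5 : δ * x^δ ≤ (x+1) * ((x+1)^δ - x^δ) := by
    have : (1 + δ/(x+1)) * x^δ * (x+1) ≤ (x+1)^δ * (x+1) := by gcongr
    have e : (1 + δ/(x+1)) * x^δ * (x+1) = (x+1) * x^δ + δ * x^δ := by field_simp
    linarith
  nlinarith [mul_le_mul_of_nonneg_right h5 hp'.le]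

lemma aux_sum (s C₀ M₀ M₁ : ℝ) (hs : s ∈ Set.Ioo (0:ℝ) 1) (hC₀ : 1 ≤ C₀) (hM₀ : 1 ≤ M₀)
    (hM : 2 * M₀ ≤ M₁) (j : ℕ) :
    ∑ k ∈ Finset.range (j+1), (j.choose k : ℝ) * (C₀ * M₀^(j-k) * ((j-k).factorial : ℝ)^(1/s)) *
      (M₁^k * (k.factorial : ℝ)^(1/s)) ≤ 2 * C₀ * (M₁^j * (j.factorial : ℝ)^(1/s)) := by
  have hM1 : 0 < M₁ := by linarith
  have hs1 : 1 ≤ 1/s := by rw [le_div_iff₀ hs.1]; linarith [hs.2]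
  have hterm : ∀ k ∈ Finset.range (j+1),
      (j.choose k : ℝ) * (C₀ * M₀^(j-k) * ((j-k).factorial : ℝ)^(1/s)) *
      (M₁^k * (k.factorial : ℝ)^(1/s)) ≤
      C₀ * (M₁^j * (j.factorial : ℝ)^(1/s)) * (1/2)^(j-k) := by
    intro k hk
    have hkj : k ≤ j := by simpa [Nat.lt_succ_iff] using hk
    have hf : (j.factorial : ℝ) = j.choose k * k.factorial * (j-k).factorial := by
      exact_mod_cast (Nat.choose_mul_factorial_mul_factorial hkj).symm
    have hc1 : (1:ℝ) ≤ j.choose k := by exact_mod_cast Nat.choose_pos hkj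
    have hc : (j.choose k : ℝ) ≤ (j.choose k : ℝ)^(1/s) := by
      simpa using rpow_le_rpow_of_exponent_le hc1 hs1
    have hMj : M₀^(j-k) * M₁^k ≤ M₁^j * (1/2)^(j-k) := by
      have : M₁^j = M₁^(j-k) * M₁^k := by rw [← pow_add]; congr 1; omega
      rw [this]
      have : M₀^(j-k) ≤ (M₁ * (1/2))^(j-k) := by
        apply pow_le_pow_left₀ (by linarith); linarith
      rw [mul_pow] at this
      calc _ ≤ (M₁^(j-k) * (1/2)^(j-k)) * M₁^k := by gcongr
        _ = _ := by ring
    rw [hf, mul_rpow (by positivity) (by positivity), mul_rpow (by positivity) (by positivity)]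
    calc _ = C₀ * (M₀^(j-k) * M₁^k) * ((j.choose k : ℝ) * (k.factorial : ℝ)^(1/s) *
            ((j-k).factorial : ℝ)^(1/s)) := by ring
      _ ≤ C₀ * (M₁^j * (1/2)^(j-k)) * ((j.choose k : ℝ)^(1/s) * (k.factorial : ℝ)^(1/s) *
            ((j-k).factorial : ℝ)^(1/s)) := by gcongr
      _ = _ := by ring
  refine (Finset.sum_le_sum hterm).trans ?_
  rw [← Finset.mul_sum]
  have hg : ∑ k ∈ Finset.range (j+1), (1/2:ℝ)^(j-k) ≤ 2 := by
    have e := Finset.sum_range_reflect (fun k => (1/2:ℝ)^k) (j+1)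
    simp only [Nat.add_sub_cancel] at e
    have e2 : ∑ k ∈ Finset.range (j+1), (1/2:ℝ)^(j-k) = ∑ k ∈ Finset.range (j+1), (1/2:ℝ)^k := by
      rw [← e]
    rw [e2]
    exact sum_geometric_two_le _
  calc _ ≤ C₀ * (M₁^j * (j.factorial : ℝ)^(1/s)) * 2 := by gcongr
    _ = _ := by ring

lemma aux_main (s δ C₀ M₀ : ℝ) (hs : s ∈ Set.Ioo (0:ℝ) 1)
    (hδ : δ ∈ Set.Ioo (0:ℝ) (1/s - 1)) (hC₀ : 1 ≤ C₀) (hM₀ : 1 ≤ M₀) (M₁ : ℝ)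
    (hM₁ : M₁ = 2 * M₀ + (4 + 4 * C₀) * (2/δ) * 10^(1/s)) (a h : ℝ → ℝ) (m : ℝ)
    (r : ℕ → ℝ) (hr : ∀ j : ℕ, r j = 1/2 + 1/(2*((9:ℝ)+j)^δ))
    (ha : ContDiffOn ℝ (⊤ : ℕ∞) a (Set.Ioo (-1) 1))
    (hab : ∀ v ∈ Set.Ioo (-1:ℝ) 1, ∀ α : ℕ,
        |iteratedDeriv α a v| ≤ C₀ * M₀ ^ α * ((α.factorial : ℝ)) ^ (1/s))
    (hh : ContDiffOn ℝ (⊤ : ℕ∞) h (Set.Ioo (-1) 1))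
    (hode : ∀ v ∈ Set.Ioo (-1:ℝ) 1, m ^ 2 * h v - deriv (deriv h) v + a v * h v = 0)
    (hint : (∫ v in (-1:ℝ)..1, (h v) ^ 2) = 1) (j : ℕ) :
    ∫ v in (-(r j))..(r j), (iteratedDeriv j h v) ^ 2 ≤
      (M₁ ^ j * ((j.factorial : ℝ)) ^ (1/s)) ^ 2 := by
  have hδ0 : 0 < δ := hδ.1
  have hK : 0 < (4 + 4 * C₀) * (2/δ) * (10:ℝ)^(1/s) := by
    have : (0:ℝ) < 10^(1/s) := rpow_pos_of_pos (by norm_num) _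
    positivity
  have hM1 : 0 < M₁ := by linarith
  have hr0 : ∀ j, 1/2 < r j := by
    intro j; rw [hr]
    have : (0:ℝ) < (9 + j)^δ := rpow_pos_of_pos (by positivity) _
    have : 0 < 1/(2*((9:ℝ)+j)^δ) := by positivity
    linarith
  have hr1 : ∀ j, r j < 1 := by
    intro j; rw [hr]
    have : (1:ℝ) < (9 + j)^δ := one_lt_rpow (by linarith [(Nat.cast_nonneg j : (0:ℝ) ≤ j)]) hδ0
    have : 1/(2*((9:ℝ)+j)^δ) < 1/2 := by
      apply one_div_lt_one_div_of_lt <;> linarith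
    linarith
  have hrd : ∀ j : ℕ, δ / 2 / ((10:ℝ)^(1/s) * (j+1)^(1/s)) ≤ r j - r (j+1) := by
    intro j
    have := aux_rdiff δ (9+j) hδ0 (by linarith [(Nat.cast_nonneg j : (0:ℝ) ≤ j)])
    rw [hr, hr]; push_cast
    rw [show (9:ℝ) + (j + 1) = 9 + j + 1 by ring]
    have h2 : ((9:ℝ)+j+1)^(1+δ) ≤ (10:ℝ)^(1/s) * (j+1)^(1/s) := by
      rw [← mul_rpow (by norm_num) (by positivity)]
      calc ((9:ℝ)+j+1)^(1+δ) ≤ ((9:ℝ)+j+1)^(1/s) := by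
            apply rpow_le_rpow_of_exponent_le
            · linarith [(Nat.cast_nonneg j : (0:ℝ) ≤ j)]
            · linarith [hδ.2]
        _ ≤ _ := by
            apply rpow_le_rpow (by positivity) _ (by have := hs.1; positivity)
            linarith [(Nat.cast_nonneg j : (0:ℝ) ≤ j)]
    have h3 : (0:ℝ) < ((9:ℝ)+j+1)^(1+δ) := rpow_pos_of_pos (by positivity) _
    have h4 : δ / 2 / ((10:ℝ)^(1/s) * (j+1)^(1/s)) ≤ δ / 2 / ((9:ℝ)+j+1)^(1+δ) := by gcongr
    linarith
  have hpos : ∀ j : ℕ, (0:ℝ) < (10:ℝ)^(1/s) * ((j:ℝ)+1)^(1/s) := fun j =>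
    mul_pos (rpow_pos_of_pos (by norm_num) _) (rpow_pos_of_pos (by positivity) _)
  have hrlt : ∀ j : ℕ, r (j+1) < r j := by
    intro j
    have := hrd j
    have h2 := hpos j
    have : 0 < δ / 2 / ((10:ℝ)^(1/s) * ((j:ℝ)+1)^(1/s)) := by positivity
    linarith
  have hanti : Antitone r := antitone_nat_of_succ_le fun j => (hrlt j).le
  set U : ℕ → ℝ := fun j => M₁ ^ j * ((j.factorial : ℝ)) ^ (1/s) with hU
  have hUpos : ∀ j, 0 < U j := fun j =>
    mul_pos (pow_pos hM1 _) (rpow_pos_of_pos (by exact_mod_cast j.factorial_pos) _)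
  have hcont : ∀ k, ContinuousOn (iteratedDeriv k h) (Set.Ioo (-1) 1) := fun k =>
    (aux_contDiffOn_iter h hh k).continuousOn
  have hsub : ∀ i, Set.uIcc (-(r i)) (r i) ⊆ Set.Ioo (-1:ℝ) 1 := by
    intro i x hx
    rw [Set.uIcc_of_le (by linarith [hr0 i])] at hx
    exact ⟨by linarith [hx.1, hr1 i], by linarith [hx.2, hr1 i]⟩
  have hii : ∀ i k, IntervalIntegrable (fun v => (iteratedDeriv k h v)^2) volume (-(r i)) (r i) :=
    fun i k => (((hcont k).mono (hsub i)).pow 2).intervalIntegrable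
  change _ ≤ (U j)^2
  induction j using Nat.strong_induction_on with
  | _ n ih =>
  rcases n with _ | j
  · have : IntervalIntegrable (fun v => (h v)^2) volume (-1) 1 := by
      by_contra hc
      rw [intervalIntegral.integral_undef hc] at hint
      norm_num at hint
    have h2 := intervalIntegral.integral_mono_interval (a := -(r 0)) (b := r 0)
      (by linarith [hr1 0]) (by linarith [hr0 0]) (hr1 0).le
      (Eventually.of_forall fun v => by simp only [Pi.zero_apply]; positivity) this
    simpa [hU, hint] using h2.trans_eq hint
  · have ih' : ∀ k ≤ j, ∫ v in (-(r j))..(r j), (iteratedDeriv k h v) ^ 2 ≤ (U k)^2 := by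
      intro k hk
      refine le_trans ?_ (ih k (by omega))
      have := hanti hk
      exact intervalIntegral.integral_mono_interval (by linarith) (by linarith [hr0 j]) this
        (Eventually.of_forall fun v => by simp only [Pi.zero_apply]; positivity) (hii k k)
    set c : ℕ → ℝ := fun k => (j.choose k : ℝ) *
      (C₀ * M₀^(j-k) * ((j-k).factorial : ℝ)^(1/s)) with hc
    have hc0 : ∀ k, 0 ≤ c k := fun k => by simp only [hc]; positivity
    set G : ℝ → ℝ := fun v => ∑ k ∈ Finset.range (j+1), c k *
      ((U k / U j / 2) * (iteratedDeriv j h v)^2 + (U j / U k / 2) * (iteratedDeriv k h v)^2)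
      with hG
    have hGi : ∀ k, IntervalIntegrable (fun v => c k *
      ((U k / U j / 2) * (iteratedDeriv j h v)^2 + (U j / U k / 2) * (iteratedDeriv k h v)^2))
      volume (-(r j)) (r j) := fun k =>
      (((hii j j).const_mul _).add ((hii j k).const_mul _)).const_mul _
    have cG : ContinuousOn G (Set.Ioo (-1) 1) := by
      apply continuousOn_finsetSum
      intro k _
      have := hcont k
      have := hcont j
      fun_prop
    have hE := aux_energy (iteratedDeriv j h) (iteratedDeriv (j+1) h) (iteratedDeriv (j+2) h) G
      (r j) (r (j+1)) (by linarith [hr0 (j+1)]) (hrlt j) (hr1 j)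
      (aux_hasDerivAt_iter h hh j) (aux_hasDerivAt_iter h hh (j+1)) (hcont _) cG
      (by
        intro v _
        apply Finset.sum_nonneg
        intro k _
        have := hc0 k; have := hUpos k; have := hUpos j
        positivity)
      (by
        intro v hv
        rw [aux_ode a h m ha hh hode j v hv]
        have h1 : -(∑ k ∈ Finset.range (j+1), (j.choose k : ℝ) * iteratedDeriv k h v *
            iteratedDeriv (j-k) a v) * iteratedDeriv j h v ≤ G v := by
          rw [← Finset.sum_neg_distrib, Finset.sum_mul]
          apply Finset.sum_le_sum
          intro k _
          have hb := hab v hv (j-k)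
          have hk := hUpos k
          have hj := hUpos j
          set x := iteratedDeriv k h v
          set y := iteratedDeriv j h v
          have hxy : |x * y| ≤ (U k / U j / 2) * y^2 + (U j / U k / 2) * x^2 := by
            have e : (U k / U j / 2) * y^2 + (U j / U k / 2) * x^2 =
              ((U k * |y|)^2 + (U j * |x|)^2) / (2 * (U k * U j)) := by
              rw [mul_pow (U k) |y|, mul_pow (U j) |x|, sq_abs, sq_abs]; field_simp
            rw [e, le_div_iff₀ (by positivity), abs_mul]
            nlinarith [sq_nonneg (U k * |y| - U j * |x|)]
          calc _ ≤ |-((j.choose k : ℝ) * x * iteratedDeriv (j-k) a v) * y| := le_abs_self _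
            _ = (j.choose k : ℝ) * |iteratedDeriv (j-k) a v| * |x * y| := by
              rw [abs_mul, abs_neg, abs_mul, abs_mul, abs_mul x y, Nat.abs_cast]; ring
            _ ≤ (j.choose k : ℝ) * (C₀ * M₀^(j-k) * ((j-k).factorial : ℝ)^(1/s)) *
                ((U k / U j / 2) * y^2 + (U j / U k / 2) * x^2) := by gcongr
        nlinarith [mul_nonneg (sq_nonneg m) (sq_nonneg (iteratedDeriv j h v))])
    have hGint : ∫ v in (-(r j))..(r j), G v ≤ 2 * C₀ * (U j)^2 := by
      simp only [hG]
      rw [intervalIntegral.integral_finsetSum (fun k _ => hGi k)]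
      calc _ ≤ ∑ k ∈ Finset.range (j+1), c k * U k * U j := by
            apply Finset.sum_le_sum
            intro k hk
            have hkj : k ≤ j := by simpa [Nat.lt_succ_iff] using hk
            rw [intervalIntegral.integral_const_mul, intervalIntegral.integral_add
              ((hii j j).const_mul _) ((hii j k).const_mul _),
              intervalIntegral.integral_const_mul, intervalIntegral.integral_const_mul,
              mul_assoc (c k) (U k) (U j)]
            have h1 := hUpos k
            have h2 := hUpos j
            have h3 := ih' k hkj
            have h4 := ih' j le_rfl
            have h5 := hc0 k
            calc _ ≤ c k * ((U k / U j / 2) * (U j)^2 + (U j / U k / 2) * (U k)^2) := by gcongr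
              _ = _ := by field_simp; ring
        _ = (∑ k ∈ Finset.range (j+1), c k * U k) * U j := by rw [Finset.sum_mul]
        _ ≤ (2 * C₀ * U j) * U j := by
            have := hUpos j
            have := aux_sum s C₀ M₀ M₁ hs hC₀ hM₀ (by linarith) j
            gcongr
        _ = _ := by ring
    rw [intervalIntegral.integral_add ((hii j j).const_mul _)
      ((cG.mono (hsub j)).intervalIntegrable), intervalIntegral.integral_const_mul] at hE
    have hE2 := ih' j le_rfl
    set I := ∫ v in (-(r (j+1)))..(r (j+1)), (iteratedDeriv (j+1) h v)^2 with hI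
    have hI0 : 0 ≤ I := intervalIntegral.integral_nonneg (by linarith [hr0 (j+1)])
      fun v _ => by positivity
    have hE3 : (1/2) * (r j ^ 2 - r (j+1) ^ 2)^2 * I ≤ (8 + 2 * C₀) * (U j)^2 := by linarith
    set P := (10:ℝ)^(1/s) * ((j:ℝ)+1)^(1/s) with hP
    have hPp : 0 < P := hpos j
    have hD : δ / 2 / P ≤ r j ^ 2 - r (j+1) ^ 2 := by
      have h1 := hrd j
      have := hr0 j
      have := hr0 (j+1)
      have := hrlt j
      nlinarith
    have hD2 : (δ / 2 / P)^2 ≤ (r j ^ 2 - r (j+1) ^ 2)^2 := by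
      have : 0 ≤ δ / 2 / P := by positivity
      gcongr
    have hE4 : (δ / 2 / P)^2 * I ≤ (16 + 4 * C₀) * (U j)^2 := by
      have := mul_le_mul_of_nonneg_right hD2 hI0
      linarith
    have hE5 : I ≤ (16 + 4 * C₀) * (U j)^2 * ((2/δ) * P)^2 := by
      have e : I = (δ / 2 / P)^2 * I * ((2/δ) * P)^2 := by field_simp
      rw [e]
      gcongr
    have hUs : U (j+1) = M₁ * ((j:ℝ)+1)^(1/s) * U j := by
      simp only [hU]
      rw [Nat.factorial_succ, pow_succ]; push_cast
      rw [mul_rpow (by positivity) (by positivity)]; ring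
    have hM2 : (4 + 4 * C₀) * (2/δ) * (10:ℝ)^(1/s) ≤ M₁ := by linarith
    calc I ≤ (16 + 4 * C₀) * (U j)^2 * ((2/δ) * P)^2 := hE5
      _ ≤ (4 + 4 * C₀)^2 * (U j)^2 * ((2/δ) * P)^2 := by gcongr; nlinarith
      _ = ((4 + 4 * C₀) * (2/δ) * (10:ℝ)^(1/s) * ((j:ℝ)+1)^(1/s) * U j)^2 := by rw [hP]; ring
      _ ≤ (U (j+1))^2 := by
        rw [hUs]
        have := hUpos j
        have : (0:ℝ) < ((j:ℝ)+1)^(1/s) := rpow_pos_of_pos (by positivity) _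
        gcongr

/-- Gevrey interior estimates for `(m² − ∂_v²)h + a·h = 0` on `(−1,1)` with Gevrey-`1/s`
coefficient `a`: the j-th derivative of `h` on the shrinking intervals `(−r_j, r_j)`,
`r_j = 1/2 + 1/(2(9+j)^δ)`, is bounded by `M₁^j (j!)^{1/s}`. -/
theorem stmt8 (s δ C₀ M₀ : ℝ) (hs : s ∈ Set.Ioo (0:ℝ) 1)
    (hδ : δ ∈ Set.Ioo (0:ℝ) (1/s - 1)) (hC₀ : 1 ≤ C₀) (hM₀ : 1 ≤ M₀) :
    ∃ M₁ > (0:ℝ), ∀ (a h : ℝ → ℝ) (m : ℝ),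
      ContDiffOn ℝ (⊤ : ℕ∞) a (Set.Ioo (-1) 1) →
      (∀ v ∈ Set.Ioo (-1:ℝ) 1, ∀ α : ℕ,
        |iteratedDeriv α a v| ≤ C₀ * M₀ ^ α * ((α.factorial : ℝ)) ^ (1/s)) →
      ContDiffOn ℝ (⊤ : ℕ∞) h (Set.Ioo (-1) 1) →
      (∀ v ∈ Set.Ioo (-1:ℝ) 1, m ^ 2 * h v - deriv (deriv h) v + a v * h v = 0) →
      (∫ v in (-1:ℝ)..1, (h v) ^ 2) = 1 →
      ∀ j : ℕ,
        Real.sqrt (∫ v in (-(1/2 + 1/(2*((9:ℝ)+j)^δ)))..(1/2 + 1/(2*((9:ℝ)+j)^δ)),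
          (iteratedDeriv j h v) ^ 2) ≤ M₁ ^ j * ((j.factorial : ℝ)) ^ (1/s) := by
  have h10 : (0:ℝ) < 10^(1/s) := rpow_pos_of_pos (by norm_num) _
  have hδ0 := hδ.1
  refine ⟨2 * M₀ + (4 + 4 * C₀) * (2/δ) * 10^(1/s), by positivity, ?_⟩
  intro a h m ha hab hh hode hint j
  have := aux_main s δ C₀ M₀ hs hδ hC₀ hM₀ _ rfl a h m (fun j : ℕ => 1/2 + 1/(2*((9:ℝ)+j)^δ))
    (fun _ => rfl) ha hab hh hode hint j
  exact Real.sqrt_le_iff.2 ⟨by positivity, this⟩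
end

section
/- Let w ≤ −10, β ∈ ℝ with 0 < |β| small, and let k ∈ ℤ, k ≥ 1. Suppose g ∈ H¹_loc(ℝ) is real-valued (or complex), satisfies sup_j [‖e^{|v|}g‖_{L²(j,j+2)} + ‖e^{|v|}g'‖_{L²(j,j+2)}] < ∞, solves (k² − ∂_v²)g(v) + (8e^{2v}/(e^{2v} − 1))·g(v) = 0 in the sense of distributions on ℝ, and g(0) = 0. Then g ≡ 0 on ℝ. -/
open Real Set Filter Topology MeasureTheory

lemma aux_radius (φ : ℝ → ℝ) (hs : HasCompactSupport φ) :
    ∃ R : ℝ, 0 < R ∧ tsupport φ ⊆ Ioo (-R) R := by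
  obtain ⟨R, hR⟩ := hs.isCompact.isBounded.subset_ball_lt 0 0
  refine ⟨R, hR.1, ?_⟩
  have := hR.2
  rwa [Real.ball_eq_Ioo, zero_sub, zero_add] at this

lemma aux_ii (a : ℝ → ℝ) (ha : LocallyIntegrable a volume) (x y : ℝ) :
    IntervalIntegrable a volume x y :=
  intervalIntegrable_iff.mpr <|
      (ha.integrableOn_isCompact isCompact_uIcc).mono_set uIoc_subset_uIcc

/-- integration by parts against a test function -/
lemma aux_ibp (a A : ℝ → ℝ) (ha : LocallyIntegrable a volume)
    (hA : ∀ x y : ℝ, A y - A x = ∫ v in x..y, a v)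
    (φ : ℝ → ℝ) (hφ : ContDiff ℝ (⊤ : ℕ∞) φ) (hs : HasCompactSupport φ) :
    ∫ v, A v * deriv φ v = - ∫ v, a v * φ v := by
  obtain ⟨R, hR, hsub⟩ := aux_radius φ hs
  have hsub' : tsupport φ ⊆ Ioc (-R) R := hsub.trans Ioo_subset_Ioc_self
  have e1 : ∫ v, A v * deriv φ v = ∫ v in (-R)..R, A v * deriv φ v := by
    rw [intervalIntegral.integral_eq_integral_of_support_subset]
    refine (Function.support_mul_subset_right _ _).trans ?_
    exact (support_deriv_subset).trans hsub'
  have e2 : ∫ v, a v * φ v = ∫ v in (-R)..R, a v * φ v := by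
    rw [intervalIntegral.integral_eq_integral_of_support_subset]
    refine (Function.support_mul_subset_right _ _).trans ?_
    exact (subset_tsupport φ).trans hsub'
  have hAeq : A = fun x => (∫ v in (-R)..x, a v) + A (-R) := by
    funext x; rw [← hA]; ring
  have hac : AbsolutelyContinuousOnInterval A (-R) R := by
    have h1 := (aux_ii a ha (-R) R).absolutelyContinuousOnInterval_intervalIntegral
      (c := -R) left_mem_uIcc
    have h2 : AbsolutelyContinuousOnInterval (fun _ : ℝ => A (-R)) (-R) R :=
      (LipschitzWith.const (A (-R))).lipschitzOnWith.absolutelyContinuousOnInterval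
    rw [hAeq]
    exact h1.add h2
  have hpc : AbsolutelyContinuousOnInterval φ (-R) R :=
    ContDiffOn.absolutelyContinuousOnInterval (hφ.of_le (by norm_cast)).contDiffOn
  have hder : ∀ᵐ x, deriv A x = a x := by
    filter_upwards [_root_.LocallyIntegrable.ae_hasDerivAt_integral ha] with x hx
    rw [hAeq]
    exact ((hx (-R)).add_const _).deriv
  have z1 : φ R = 0 := image_eq_zero_of_notMem_tsupport fun h => (lt_irrefl _ (hsub h).2)
  have z2 : φ (-R) = 0 := image_eq_zero_of_notMem_tsupport fun h => (lt_irrefl _ (hsub h).1)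
  rw [e1, e2, hac.integral_mul_deriv_eq_deriv_mul hpc, z1, z2]
  have : ∫ x in (-R)..R, deriv A x * φ x = ∫ x in (-R)..R, a x * φ x := by
    apply intervalIntegral.integral_congr_ae
    filter_upwards [hder] with x hx _
    rw [hx]
  rw [this]; ring

/-- du Bois-Reymond -/
lemma aux_dbr (f : ℝ → ℝ) (hf : LocallyIntegrable f volume)
    (h : ∀ φ : ℝ → ℝ, ContDiff ℝ (⊤ : ℕ∞) φ → HasCompactSupport φ →
      ∫ v, f v * deriv φ v = 0) : ∃ c : ℝ, ∀ᵐ x, f x = c := by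
  -- a normalized bump
  let b : ContDiffBump (0 : ℝ) := ⟨1, 2, by norm_num, by norm_num⟩
  let η : ℝ → ℝ := b.normed volume
  have hη : ContDiff ℝ (⊤ : ℕ∞) η := b.contDiff_normed
  have hηs : HasCompactSupport η := b.hasCompactSupport_normed
  have hη1 : ∫ x, η x = 1 := b.integral_normed
  have hint : ∀ ψ : ℝ → ℝ, ContDiff ℝ (⊤ : ℕ∞) ψ → HasCompactSupport ψ →
      Integrable (fun x => f x * ψ x) := by
    intro ψ hψ hs
    have := hf.integrable_smul_left_of_hasCompactSupport hψ.continuous hs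
    simpa [mul_comm] using this
  refine ⟨∫ x, f x * η x, ?_⟩
  set c := ∫ x, f x * η x with hc
  have key : ∀ᵐ x, f x - c = 0 := by
    apply ae_eq_zero_of_integral_contDiff_smul_eq_zero (hf.sub (locallyIntegrable_const c))
    intro ψ hψ hs
    have hψi : Integrable ψ := hψ.continuous.integrable_of_hasCompactSupport hs
    have hηi : Integrable η := hη.continuous.integrable_of_hasCompactSupport hηs
    set m := ∫ x, ψ x with hm
    let ζ : ℝ → ℝ := fun x => ψ x - m * η x
    have hζ : ContDiff ℝ (⊤ : ℕ∞) ζ := hψ.sub (contDiff_const.mul hη)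
    have hζs : HasCompactSupport ζ := hs.sub (hηs.mul_left)
    have hζ0 : ∫ x, ζ x = 0 := by
      simp only [ζ]
      rw [integral_sub hψi (hηi.const_mul m), integral_const_mul, hη1]; simp [hm]
    obtain ⟨R, hR, hsub⟩ := aux_radius ζ hζs
    let Φ : ℝ → ℝ := fun x => ∫ v in (-R)..x, ζ v
    have hΦd : ∀ x, HasDerivAt Φ (ζ x) x := fun x =>
      intervalIntegral.integral_hasDerivAt_right (hζ.continuous.intervalIntegrable _ _)
        hζ.continuous.stronglyMeasurable.stronglyMeasurableAtFilter hζ.continuous.continuousAt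
    have hΦd' : deriv Φ = ζ := funext fun x => (hΦd x).deriv
    have hΦ : ContDiff ℝ (⊤ : ℕ∞) Φ := by
      rw [contDiff_infty_iff_deriv, hΦd']
      exact ⟨fun x => (hΦd x).differentiableAt, hζ⟩
    have hΦs : HasCompactSupport Φ := by
      apply HasCompactSupport.intro (K := Icc (-R) R) isCompact_Icc
      intro x hx
      rcases lt_or_ge x (-R) with h1 | h1
      · have : ∫ v in (-R)..x, ζ v = ∫ v in (-R)..x, (0:ℝ) := by
          apply intervalIntegral.integral_congr
          intro y hy
          rw [uIcc_of_ge h1.le] at hy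
          exact image_eq_zero_of_notMem_tsupport fun h => absurd (hsub h).1 (not_lt.2 hy.2)
        simp only [Φ]
        rw [this]; simp
      · have h2 : R < x := by
          by_contra h2
          exact hx ⟨h1, not_lt.1 h2⟩
        simp only [Φ]
        rw [intervalIntegral.integral_eq_integral_of_support_subset, hζ0]
        intro y hy
        have := hsub (subset_tsupport _ hy)
        exact ⟨this.1, this.2.le.trans h2.le⟩
    have h0 := h Φ hΦ hΦs
    rw [hΦd'] at h0
    have e : ∀ x, f x * ζ x = f x * ψ x - m * (f x * η x) := fun x => by simp only [ζ]; ring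
    simp_rw [e] at h0
    rw [integral_sub (hint ψ hψ hs) ((hint η hη hηs).const_mul m), integral_const_mul] at h0
    have e' : ∀ x, ψ x • (f x - c) = f x * ψ x - c * ψ x := fun x => by
      simp only [smul_eq_mul]; ring
    simp only [Pi.sub_apply]
    simp_rw [e']
    rw [integral_sub (hint ψ hψ hs) (hψi.const_mul c), integral_const_mul, ← hm]
    linarith
  filter_upwards [key] with x hx
  linarith

/-- The maximum principle on the right half line. -/
lemma aux_pos (V g G : ℝ → ℝ) (M q : ℝ) (hq : 0 ≤ q)
    (hg : ∀ v, HasDerivAt g (G v) v) (hGc : Continuous G)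
    (hG : ∀ v, v ≠ 0 → HasDerivAt G ((q + V v) * g v) v)
    (hV : ∀ v, 0 < v → 0 ≤ V v) (hg0 : g 0 = 0)
    (hM : ∀ j : ℤ, (∫ v in (j:ℝ)..(j+2), Real.exp (2*|v|) * ((g v)^2 + (G v)^2)) ≤ M) :
    ∀ v, 0 ≤ v → g v = 0 := by
  have hgc : Continuous g := continuous_iff_continuousAt.2 fun v => (hg v).continuousAt
  have mono1 : MonotoneOn (fun v => g v * G v) (Ici 0) := by
    apply monotoneOn_of_hasDerivWithinAt_nonneg (convex_Ici 0) (hgc.mul hGc).continuousOn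
      (f' := fun v => G v * G v + g v * ((q + V v) * g v))
    · intro x hx
      rw [interior_Ici] at hx
      exact ((hg x).mul (hG x (ne_of_gt hx))).hasDerivWithinAt
    · intro x hx
      rw [interior_Ici] at hx
      have := hV x hx
      have h2 : 0 ≤ (q + V x) * (g x * g x) := mul_nonneg (by linarith) (mul_self_nonneg _)
      nlinarith [mul_self_nonneg (G x)]
  have mono2 : MonotoneOn (fun v => g v ^ 2) (Ici 0) := by
    apply monotoneOn_of_hasDerivWithinAt_nonneg (convex_Ici 0) (hgc.pow 2).continuousOn
      (f' := fun v => 2 * (g v * G v))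
    · intro x hx
      have := (hg x).pow 2
      have h2 : HasDerivAt (fun v => g v ^ 2) (2 * (g x * G x)) x :=
        this.congr_deriv (by push_cast; ring)
      exact h2.hasDerivWithinAt
    · intro x hx
      rw [interior_Ici] at hx
      have h := mono1 (mem_Ici.2 le_rfl) (mem_Ici.2 (le_of_lt hx)) (le_of_lt hx)
      simp only [hg0, zero_mul] at h
      linarith
  intro v hv
  by_contra hne
  have hpos : 0 < g v ^ 2 := by positivity
  obtain ⟨n, hn⟩ := exists_nat_gt (max v (M / (g v ^ 2)))
  have hn1 : v < n := (le_max_left _ _).trans_lt hn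
  have hn2 : M < n * g v ^ 2 := by
    rw [← div_lt_iff₀ hpos]; exact (le_max_right _ _).trans_lt hn
  have hj := hM n
  have hlow : ∫ x in ((n:ℤ):ℝ)..((n:ℤ)+2), (n * g v ^ 2 : ℝ) ≤
      ∫ x in ((n:ℤ):ℝ)..((n:ℤ)+2), Real.exp (2*|x|) * ((g x)^2 + (G x)^2) := by
    apply intervalIntegral.integral_mono_on (by linarith) (by simp)
    · apply Continuous.intervalIntegrable
      fun_prop
    · intro x hx
      have hx1 : (n:ℝ) ≤ x := by simpa using hx.1
      have h1 : g v ^ 2 ≤ g x ^ 2 := mono2 (mem_Ici.2 hv) (mem_Ici.2 (by linarith)) (by linarith)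
      have h2 : (n:ℝ) ≤ Real.exp (2*|x|) := by
        have := Real.add_one_le_exp (2*|x|)
        have := le_abs_self x
        have := abs_nonneg x
        linarith
      exact mul_le_mul h2 (by nlinarith [sq_nonneg (G x)]) hpos.le (Real.exp_pos _).le
  rw [intervalIntegral.integral_const, smul_eq_mul] at hlow
  have : (0:ℝ) ≤ n * g v ^ 2 := by positivity
  linarith

/-- Uniqueness from zero data on the left half line (singular Gronwall). -/
lemma aux_neg (V g G : ℝ → ℝ) (q : ℝ) (hq : 0 ≤ q)
    (hgG : ∀ v, g v = ∫ x in (0:ℝ)..v, G x) (hGc : Continuous G)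
    (hG : ∀ v, G v = ∫ x in (0:ℝ)..v, (q + V x) * g x)
    (hV : ∀ v, v < 0 → |V v| * |v| ≤ 4) :
    ∀ v, v ≤ 0 → g v = 0 := by
  intro v hv
  set T := -v with hT
  have hT0 : 0 ≤ T := by linarith
  set K : ℝ := q * T + 4 with hK
  have hK0 : 0 < K := by positivity
  set f : ℝ → ℝ := fun t => Real.exp (2 * K * t) * |G t| with hf
  have hfc : Continuous f := by fun_prop
  obtain ⟨t0, ht0, hmax⟩ := (isCompact_Icc (a := -T) (b := 0)).exists_isMaxOn
    ⟨0, by simp [hT0]⟩ hfc.continuousOn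
  set S := f t0 with hS
  have hS0 : 0 ≤ S := by positivity
  have b1 : ∀ t ∈ Icc (-T) 0, |G t| ≤ S * Real.exp (-(2 * K) * t) := by
    intro t ht
    have h1 : f t ≤ S := hmax ht
    have h2 : |G t| = f t * Real.exp (-(2 * K) * t) := by
      simp only [hf]
      rw [mul_right_comm, ← Real.exp_add]
      simp
    rw [h2]
    gcongr
  have b2 : ∀ t ∈ Icc (-T) 0, |g t| ≤ S * Real.exp (-(2 * K) * t) * |t| := by
    intro t ht
    rw [hgG t, ← Real.norm_eq_abs]
    have := intervalIntegral.norm_integral_le_of_norm_le_const (a := 0) (b := t) (f := G)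
      (C := S * Real.exp (-(2 * K) * t)) ?_
    · simpa using this
    · intro s hs
      rw [uIoc_of_ge ht.2] at hs
      refine (b1 s ⟨by linarith [ht.1, hs.1], hs.2⟩).trans ?_
      have : -(2 * K) * s ≤ -(2 * K) * t := by nlinarith [hs.1]
      gcongr
  have b3 : ∀ t ∈ Ico (-T) 0, |(q + V t) * g t| ≤ K * S * Real.exp (-(2 * K) * t) := by
    intro t ht
    have h1 := b2 t ⟨ht.1, ht.2.le⟩
    have h2 := hV t ht.2
    have h3 : |t| ≤ T := by rw [abs_of_neg ht.2]; linarith [ht.1]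
    have h4 : |q + V t| ≤ q + |V t| := (abs_add_le _ _).trans (by rw [abs_of_nonneg hq])
    set e := S * Real.exp (-(2 * K) * t) with he
    have he0 : 0 ≤ e := by positivity
    rw [abs_mul]
    calc |q + V t| * |g t| ≤ (q + |V t|) * (e * |t|) := by gcongr
      _ = (q * |t| + |V t| * |t|) * e := by ring
      _ ≤ (q * T + 4) * e := by gcongr
      _ = _ := by rw [he, hK]; ring
  have b4 : |G t0| ≤ S / 2 * Real.exp (-(2 * K) * t0) := by
    rw [hG t0, intervalIntegral.integral_symm, abs_neg, ← Real.norm_eq_abs]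
    have hI : ∫ t in t0..0, K * S * Real.exp (-(2 * K) * t)
        = S / 2 * Real.exp (-(2 * K) * t0) - S / 2 := by
      have hd : ∀ t ∈ uIcc t0 0, HasDerivAt (fun t => -(S / 2) * Real.exp (-(2 * K) * t))
          (K * S * Real.exp (-(2 * K) * t)) t := by
        intro t _
        have h := (((hasDerivAt_id t).const_mul (-(2*K))).exp).const_mul (-(S/2))
        exact h.congr_deriv (by simp only [id]; ring)
      rw [intervalIntegral.integral_eq_sub_of_hasDerivAt hd
        (Continuous.intervalIntegrable (by fun_prop) _ _)]
      simp; ring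
    have h := intervalIntegral.norm_integral_le_of_norm_le (μ := volume) (a := t0) (b := 0)
      (f := fun x => (q + V x) * g x)
      (g := fun t => K * S * Real.exp (-(2 * K) * t)) ht0.2 ?_
      (Continuous.intervalIntegrable (by fun_prop) _ _)
    · rw [hI] at h
      linarith
    · have hne : ∀ᵐ t : ℝ, t ≠ 0 := by
        simp [ae_iff]
      filter_upwards [hne] with t ht hmem
      exact b3 t ⟨by linarith [ht0.1, hmem.1], lt_of_le_of_ne hmem.2 ht⟩
  have hS2 : S ≤ S / 2 := by
    calc S = Real.exp (2 * K * t0) * |G t0| := rfl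
      _ ≤ Real.exp (2 * K * t0) * (S / 2 * Real.exp (-(2 * K) * t0)) := by gcongr
      _ = S / 2 * (Real.exp (2 * K * t0) * Real.exp (-(2 * K) * t0)) := by ring
      _ = S / 2 := by rw [← Real.exp_add]; simp
  have hSz : S = 0 := by linarith
  have := b2 v ⟨by linarith, hv⟩
  rw [hSz] at this
  simpa using this

lemma aux_locint (u : ℝ → ℝ)
    (h : ∀ φ : ℝ → ℝ, ContDiff ℝ (⊤ : ℕ∞) φ → HasCompactSupport φ →
      Integrable (fun v => u v * φ v)) : LocallyIntegrable u volume := by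
  intro x
  let b : ContDiffBump x := ⟨1, 2, by norm_num, by norm_num⟩
  refine ⟨Metric.closedBall x 1, Metric.closedBall_mem_nhds x one_pos, ?_⟩
  refine ((h b b.contDiff b.hasCompactSupport).integrableOn (s := Metric.closedBall x 1)).congr_fun
    ?_ measurableSet_closedBall
  intro y hy
  have : b y = 1 := b.one_of_mem_closedBall hy
  simp [this]

/-- Rigidity in the limiting absorption principle for `w ≤ −10`: a function `g` with
weak derivative `g'`, exponentially weighted `H¹`-type bounds on unit intervals, solving
`(k² − ∂_v²)g + (8e^{2v}/(e^{2v}−1))g = 0` distributionally with `g(0) = 0`, vanishes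
identically. -/
theorem stmt16 (w β : ℝ) (hw : w ≤ -10) (hβ : β ≠ 0) (k : ℤ) (hk : 1 ≤ k)
    (g g' : ℝ → ℝ)
    (hloc : MeasureTheory.LocallyIntegrable g' MeasureTheory.volume)
    (hFTC : ∀ a c : ℝ, g c - g a = ∫ v in a..c, g' v)
    (hbounds : ∃ M : ℝ, ∀ j : ℤ,
      (∫ v in (j:ℝ)..(j+2), Real.exp (2*|v|) * ((g v)^2 + (g' v)^2)) ≤ M)
    (heq : ∀ φ : ℝ → ℝ, ContDiff ℝ (⊤ : ℕ∞) φ → HasCompactSupport φ →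
      MeasureTheory.Integrable
        (fun v => (8 * Real.exp (2*v) / (Real.exp (2*v) - 1)) * g v * φ v) ∧
      ∫ v : ℝ, (g v * ((k:ℝ)^2 * φ v - deriv (deriv φ) v)
        + (8 * Real.exp (2*v) / (Real.exp (2*v) - 1)) * g v * φ v) = 0)
    (hg0 : g 0 = 0) :
    ∀ v, g v = 0 := by
  obtain ⟨M, hM⟩ := hbounds
  set V : ℝ → ℝ := fun v => 8 * Real.exp (2*v) / (Real.exp (2*v) - 1) with hVdef
  have hgc : Continuous g := by
    have : g = fun x => (∫ v in (0:ℝ)..x, g' v) := by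
      funext x; rw [← hFTC, hg0, sub_zero]
    rw [this]
    exact intervalIntegral.continuous_primitive (fun a b => aux_ii g' hloc a b) 0
  have hVg : LocallyIntegrable (fun v => V v * g v) volume :=
    aux_locint _ fun φ hφ hs => (heq φ hφ hs).1
  set q : ℝ := (k:ℝ)^2 with hq
  have hq0 : 0 ≤ q := by positivity
  set W : ℝ → ℝ := fun v => (q + V v) * g v with hW
  have hWl : LocallyIntegrable W volume := by
    have h1 : LocallyIntegrable (fun v => q * g v) volume :=
      (continuous_const.mul hgc).locallyIntegrable
    have h2 := h1.add hVg
    have e : W = (fun v => q * g v) + fun v => V v * g v := by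
      funext v; simp only [hW, Pi.add_apply]; ring
    rw [e]; exact h2
  have hWii := aux_ii W hWl
  set G0 : ℝ → ℝ := fun x => ∫ v in (0:ℝ)..x, W v with hG0
  have hG0c : Continuous G0 := intervalIntegral.continuous_primitive (fun a b => hWii a b) 0
  have hG0F : ∀ x y, G0 y - G0 x = ∫ v in x..y, W v := fun x y => by
    simp only [hG0]
    exact intervalIntegral.integral_interval_sub_left (hWii _ _) (hWii _ _)
  have hint : ∀ f ψ : ℝ → ℝ, LocallyIntegrable f volume → Continuous ψ → HasCompactSupport ψ →
      Integrable (fun x => f x * ψ x) := by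
    intro f ψ hf hψ hs
    have := hf.integrable_smul_left_of_hasCompactSupport hψ hs
    simpa [mul_comm] using this
  obtain ⟨c, hc⟩ := aux_dbr (fun v => g' v - G0 v) (hloc.sub hG0c.locallyIntegrable) (by
    intro φ hφ hs
    have hdφ : ContDiff ℝ (⊤ : ℕ∞) (deriv φ) := (contDiff_infty_iff_deriv.1 hφ).2
    have hds : HasCompactSupport (deriv φ) := hs.deriv
    have hddφ : ContDiff ℝ (⊤ : ℕ∞) (deriv (deriv φ)) := (contDiff_infty_iff_deriv.1 hdφ).2
    have i1 := aux_ibp g' g hloc (fun x y => hFTC x y) (deriv φ) hdφ hds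
    have i2 := aux_ibp W G0 hWl hG0F φ hφ hs
    have i3 := (heq φ hφ hs).2
    have e3 : ∀ v, g v * (q * φ v - deriv (deriv φ) v) + V v * g v * φ v
        = W v * φ v - g v * deriv (deriv φ) v := fun v => by simp only [hW]; ring
    have i4 : ∫ v, (W v * φ v - g v * deriv (deriv φ) v) = 0 := by
      rw [← i3]; exact integral_congr_ae (ae_of_all _ fun v => (e3 v).symm)
    rw [integral_sub (hint _ _ hWl hφ.continuous hs)
      (hint _ _ hgc.locallyIntegrable hddφ.continuous hds.deriv)] at i4
    simp_rw [sub_mul]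
    rw [integral_sub (hint _ _ hloc hdφ.continuous hds)
      (hint _ _ hG0c.locallyIntegrable hdφ.continuous hds)]
    linarith)
  set G : ℝ → ℝ := fun x => G0 x + c with hGdef
  have hGc : Continuous G := hG0c.add continuous_const
  have hae : ∀ᵐ x, g' x = G x := by
    filter_upwards [hc] with x hx
    simp only [hGdef]; linarith
  have hgG : ∀ v, g v = ∫ x in (0:ℝ)..v, G x := by
    intro v
    have := hFTC 0 v
    rw [hg0, sub_zero] at this
    rw [this]
    apply intervalIntegral.integral_congr_ae
    filter_upwards [hae] with x hx _ using hx
  have hgd : ∀ v, HasDerivAt g (G v) v := by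
    intro v
    rw [show g = fun v => ∫ x in (0:ℝ)..v, G x from funext hgG]
    exact intervalIntegral.integral_hasDerivAt_right (hGc.intervalIntegrable _ _)
        hGc.stronglyMeasurable.stronglyMeasurableAtFilter hGc.continuousAt
  have hGd : ∀ v, v ≠ 0 → HasDerivAt G ((q + V v) * g v) v := by
    intro v hv
    have hden : Real.exp (2 * v) - 1 ≠ 0 := by
      intro h
      have : Real.exp (2 * v) = 1 := by linarith
      rw [Real.exp_eq_one_iff] at this
      exact hv (by linarith)
    have hWc : ContinuousAt W v := by
      have hVc : ContinuousAt V v := by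
        apply ContinuousAt.div
        · fun_prop
        · fun_prop
        · exact hden
      exact (continuousAt_const.add hVc).mul hgc.continuousAt
    have := intervalIntegral.integral_hasDerivAt_right (hWii 0 v)
      (hWl.aestronglyMeasurable.stronglyMeasurableAtFilter) hWc
    exact this.add_const c
  have hM' : ∀ j : ℤ,
      (∫ v in (j:ℝ)..(j+2), Real.exp (2*|v|) * ((g v)^2 + (G v)^2)) ≤ M := by
    intro j
    refine le_of_eq_of_le ?_ (hM j)
    apply intervalIntegral.integral_congr_ae
    filter_upwards [hae] with x hx _
    rw [hx]
  have hpos := aux_pos V g G M q hq0 hgd hGc hGd (by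
    intro v hv
    have : 1 < Real.exp (2 * v) := Real.one_lt_exp_iff.2 (by linarith)
    exact div_nonneg (by positivity) (by linarith)) hg0 hM'
  have hGz : G 0 = 0 := by
    have h1 : HasDerivWithinAt g (G 0) (Ici 0) 0 := (hgd 0).hasDerivWithinAt
    have h2 : HasDerivWithinAt g 0 (Ici 0) 0 :=
      (hasDerivWithinAt_const (0:ℝ) (Ici 0) (0:ℝ)).congr (fun x hx => hpos x hx) hg0
    exact UniqueDiffWithinAt.eq_deriv _ (uniqueDiffOn_Ici 0 0 self_mem_Ici) h1 h2
  have hcz : c = 0 := by simpa [hGdef, hG0] using hGz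
  have hneg := aux_neg V g G q hq0 hgG hGc (by
    intro v; simp only [hGdef, hcz, add_zero, hG0, hW]) (by
    intro v hv
    have h1 : Real.exp (2 * v) < 1 := Real.exp_lt_one_iff.2 (by linarith)
    have h0 : 0 < Real.exp (2 * v) := Real.exp_pos _
    have h2 : Real.exp (2 * v) * (1 - 2 * v) ≤ 1 := by
      have h3 := Real.add_one_le_exp (-(2 * v))
      calc Real.exp (2 * v) * (1 - 2 * v) ≤ Real.exp (2 * v) * Real.exp (-(2 * v)) := by
            gcongr; linarith
        _ = 1 := by rw [← Real.exp_add]; simp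
    simp only [hVdef]
    rw [abs_div, abs_of_neg hv, abs_of_neg (show Real.exp (2 * v) - 1 < 0 by linarith),
      abs_of_pos (by positivity), div_mul_eq_mul_div, div_le_iff₀ (by linarith)]
    nlinarith)
  intro v
  rcases le_total 0 v with h | h
  · exact hpos v h
  · exact hneg v h
end
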